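/- For every fixed integer n ≥ 2 and every integer d with 1 ≤ d ≤ ⌊n/2⌋ − 1, the polynomials g_{n,d}(t) and g_{n,d+1}(t) have only real zeros and g_{n,d}(t) interlaces g_{n,d+1}(t), i.e. g_{n,d} ⪯ g_{n,d+1}; consequently, the sequence {g_{n,d}(t)}_{d=1}^{⌊n/2⌋} is a generalized Sturm sequence. -/

import Mathlib

open Polynomial

/-- Speyer's g-polynomial of the uniform matroid `U_{n,d}` as a real polynomial:
`g_{n,d}(t) = Σ_{i=1}^{min(d, n-d)} ((n-i-1)! / ((d-i)! (n-d-i)! (i-1)!)) t^i`.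
When `d = 0` or `d = n` the sum is empty, so `gPoly n d = 0`, matching the convention. -/
noncomputable def gPoly (n d : ℕ) : Polynomial ℝ :=
  ∑ i ∈ Finset.Icc 1 (min d (n - d)),
    C ((Nat.factorial (n - i - 1) : ℝ) /
        ((Nat.factorial (d - i) : ℝ) * (Nat.factorial (n - d - i) : ℝ) *
          (Nat.factorial (i - 1) : ℝ))) * X ^ i

/-- A real polynomial is real-rooted (has only real zeros) if its number of real roots,
counted with multiplicity, equals its degree. -/
def RealRooted (f : Polynomial ℝ) : Prop :=
  Multiset.card f.roots = f.natDegree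

/-- The real roots of `f`, with multiplicity, listed in increasing order. -/
noncomputable def ascRoots (f : Polynomial ℝ) : List ℝ :=
  f.roots.sort (· ≤ ·)

/-- `Interlaces g f` means `g ⪯ f`: both polynomials are real-rooted and, writing the
roots of `f` in decreasing order as `α_1 ≥ α_2 ≥ ⋯` and those of `g` as `β_1 ≥ β_2 ≥ ⋯`
(equivalently, in increasing order as `a_1 ≤ ⋯ ≤ a_m` and `b_1 ≤ ⋯`), either
`deg f = deg g = m` and `β_m ≤ α_m ≤ β_{m-1} ≤ ⋯ ≤ β_1 ≤ α_1`
(i.e. `b_1 ≤ a_1 ≤ b_2 ≤ a_2 ≤ ⋯ ≤ b_m ≤ a_m`), or `deg f = deg g + 1 = m` and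
`α_m ≤ β_{m-1} ≤ α_{m-1} ≤ ⋯ ≤ β_1 ≤ α_1` (i.e. `a_1 ≤ b_1 ≤ a_2 ≤ ⋯ ≤ b_{m-1} ≤ a_m`);
by convention `0 ⪯ f` and `f ⪯ 0` for any real-rooted `f` (and the convention
`a ⪯ bt + c` for constants is subsumed by the two degree cases, whose conditions are
then vacuous). -/
def Interlaces (g f : Polynomial ℝ) : Prop :=
  RealRooted g ∧ RealRooted f ∧
    (g = 0 ∨ f = 0 ∨
      (f.natDegree = g.natDegree ∧
        (∀ i < f.natDegree, (ascRoots g).getD i 0 ≤ (ascRoots f).getD i 0) ∧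
        (∀ i, i + 1 < f.natDegree → (ascRoots f).getD i 0 ≤ (ascRoots g).getD (i + 1) 0)) ∨
      (f.natDegree = g.natDegree + 1 ∧
        (∀ i < g.natDegree, (ascRoots f).getD i 0 ≤ (ascRoots g).getD i 0) ∧
        (∀ i < g.natDegree, (ascRoots g).getD i 0 ≤ (ascRoots f).getD (i + 1) 0)))

/-- The polynomial `Σ_j C(M-j, D) C(D, j) t^j`; up to the factor `t` and a shift of the
parameters it is the `g`-polynomial. -/
noncomputable def hPoly (M D : ℕ) : Polynomial ℝ :=
  ∑ j ∈ Finset.range (D + 1), C (((M - j).choose D * D.choose j : ℕ) : ℝ) * X ^ j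

theorem hPoly_coeff (M D j : ℕ) :
    (hPoly M D).coeff j = (((M - j).choose D * D.choose j : ℕ) : ℝ) := by
  unfold hPoly
  rw [finsetSum_coeff]
  simp only [coeff_C_mul_X_pow]
  rw [Finset.sum_ite_eq]
  split_ifs with h
  · rfl
  · rw [Nat.choose_eq_zero_of_lt (n := D) (by simpa using h)]
    simp

theorem choose_mul_choose_eq_div (j a b : ℕ) :
    ((((j + a + b).choose (j + a)) * (j + a).choose j : ℕ) : ℝ) =
      ((j + a + b).factorial : ℝ) / ((a.factorial : ℝ) * b.factorial * j.factorial) := by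
  have h1 := Nat.add_choose_mul_factorial_mul_factorial (j + a) b
  have h2 := Nat.add_choose_mul_factorial_mul_factorial j a
  rw [eq_div_iff (by positivity), ← h1, ← h2]
  push_cast
  rw [Nat.choose_symm_add (a := j + a) (b := b), Nat.choose_symm_add (a := j) (b := a)]
  ring

theorem hPoly_coeff_eq_div {M D j a b : ℕ} (hD : D = j + a) (hM : M = D + b + j) :
    (hPoly M D).coeff j =
      ((j + a + b).factorial : ℝ) / ((a.factorial : ℝ) * b.factorial * j.factorial) := by
  subst hD
  rw [hPoly_coeff, ← choose_mul_choose_eq_div, show M - j = j + a + b by omega]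

theorem hPoly_coeff_eq_zero {M D j : ℕ} (h : D < j) : (hPoly M D).coeff j = 0 := by
  rw [hPoly_coeff, Nat.choose_eq_zero_of_lt h]
  simp

theorem gPoly_eq_X_mul_hPoly (M D : ℕ) (h : 2 * D ≤ M) :
    gPoly (M + 2) (D + 1) = X * hPoly M D := by
  obtain ⟨N, rfl⟩ := Nat.exists_eq_add_of_le h
  unfold gPoly hPoly
  rw [Finset.mul_sum, show min (D + 1) (2 * D + N + 2 - (D + 1)) = D + 1 by omega]
  refine Finset.sum_nbij' (· - 1) (· + 1) ?_ ?_ ?_ ?_ ?_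
  · intro i hi
    simp only [Finset.mem_Icc, Finset.mem_range] at *
    omega
  · intro i hi
    simp only [Finset.mem_Icc, Finset.mem_range] at *
    omega
  · intro i hi
    simp only [Finset.mem_Icc] at *
    omega
  · intro i _
    simp
  · intro i hi
    simp only [Finset.mem_Icc] at hi
    obtain ⟨j, rfl⟩ := Nat.exists_eq_add_of_le hi.1
    obtain ⟨a, ha⟩ := Nat.exists_eq_add_of_le hi.2
    obtain rfl : D = j + a := by omega
    rw [show 1 + j - 1 = j by omega, show 2 * (j + a) + N - j = j + a + (a + N) by omega,
      choose_mul_choose_eq_div, show 2 * (j + a) + N + 2 - (1 + j) - 1 = j + a + (a + N) by omega,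
      show j + a + 1 - (1 + j) = a by omega,
      show 2 * (j + a) + N + 2 - (j + a + 1) - (1 + j) = a + N by omega]
    ring

/-- The three-term recurrence of the Jacobi polynomials `P_D^{(-M-1,0)}(1+2t)`. -/
theorem hPoly_recurrence (M D : ℕ) (h : 2 * (D + 2) ≤ M) :
    C (2 * ((D : ℝ) + 2) * (M - 1 - D) * (M - 1 - 2 * D)) * hPoly M (D + 2) =
      (C (2 * ((M : ℝ) - 2 - 2 * D) * ((M - 3 - 2 * D) * (M - 1 - 2 * D))) * X +
        C (((M : ℝ) - 2 - 2 * D) * ((M - 3 - 2 * D) * (M - 1 - 2 * D) + (M + 1) ^ 2))) *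
          hPoly M (D + 1) -
      C (2 * ((M : ℝ) - D) * (D + 1) * (M - 3 - 2 * D)) * hPoly M D := by
  ext j
  rw [add_mul, mul_assoc (C _) X, coeff_sub, coeff_add]
  simp only [coeff_C_mul]
  rcases j with _ | i
  · obtain ⟨b, rfl⟩ : ∃ b, M = D + b + 2 := ⟨M - D - 2, by omega⟩
    rw [hPoly_coeff_eq_div (D := D + 2) (a := D + 2) (b := b) (by omega) (by omega),
      hPoly_coeff_eq_div (D := D + 1) (a := D + 1) (b := b + 1) (by omega) (by omega),
      hPoly_coeff_eq_div (D := D) (a := D) (b := b + 2) (by omega) (by omega),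
      mul_coeff_zero, coeff_X_zero]
    rw [show 0 + (D + 2) + b = D + b + 2 by omega, show 0 + (D + 1) + (b + 1) = D + b + 2 by omega,
      show 0 + D + (b + 2) = D + b + 2 by omega]
    simp only [Nat.factorial_succ, Nat.factorial_zero]
    push_cast
    field_simp
    ring
  rw [coeff_X_mul]
  rcases Nat.lt_or_ge (D + 1) i with h1 | h1
  · rw [hPoly_coeff_eq_zero (by omega), hPoly_coeff_eq_zero (by omega),
      hPoly_coeff_eq_zero (by omega), hPoly_coeff_eq_zero (by omega)]
    simp
  rcases Nat.eq_or_lt_of_le h1 with rfl | h2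
  · obtain ⟨b, rfl⟩ : ∃ b, M = 2 * (D + 2) + b := ⟨M - 2 * (D + 2), by omega⟩
    rw [hPoly_coeff_eq_zero (D := D + 1) (j := D + 1 + 1) (by omega),
      hPoly_coeff_eq_zero (D := D) (by omega),
      hPoly_coeff_eq_div (D := D + 2) (a := 0) (b := b) (by omega) (by omega),
      hPoly_coeff_eq_div (D := D + 1) (a := 0) (b := b + 2) (by omega) (by omega)]
    rw [show D + 1 + 1 + 0 + b = D + b + 2 by omega,
      show D + 1 + 0 + (b + 2) = D + b + 3 by omega]
    simp only [Nat.factorial_succ, Nat.factorial_zero]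
    push_cast
    field_simp
    ring
  rcases Nat.eq_or_lt_of_le (Nat.lt_succ_iff.mp h2) with rfl | h3
  · obtain ⟨b, rfl⟩ : ∃ b, M = 2 * (i + 2) + b := ⟨M - 2 * (i + 2), by omega⟩
    rw [hPoly_coeff_eq_zero (D := i) (j := i + 1) (by omega),
      hPoly_coeff_eq_div (D := i + 2) (a := 1) (b := b + 1) (by omega) (by omega),
      hPoly_coeff_eq_div (D := i + 1) (j := i + 1) (a := 0) (b := b + 2) (by omega) (by omega),
      hPoly_coeff_eq_div (D := i + 1) (j := i) (a := 1) (b := b + 3) (by omega) (by omega)]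
    rw [show i + 1 + 1 + (b + 1) = i + b + 3 by omega,
      show i + 1 + 0 + (b + 2) = i + b + 3 by omega,
      show i + 1 + (b + 3) = i + b + 4 by omega]
    simp only [Nat.factorial_succ, Nat.factorial_zero]
    push_cast
    field_simp
    ring
  · obtain ⟨a, rfl⟩ := Nat.exists_eq_add_of_le (show i + 1 ≤ D from h3)
    obtain ⟨b, rfl⟩ : ∃ b, M = (i + 1 + a) + 2 + b + (i + 1) :=
      ⟨M - ((i + 1 + a) + 2 + (i + 1)), by omega⟩
    rw [hPoly_coeff_eq_div (D := i + 1 + a + 2) (a := a + 2) (b := b) (by omega) (by omega),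
      hPoly_coeff_eq_div (D := i + 1 + a + 1) (j := i + 1) (a := a + 1) (b := b + 1)
        (by omega) (by omega),
      hPoly_coeff_eq_div (D := i + 1 + a + 1) (j := i) (a := a + 2) (b := b + 2)
        (by omega) (by omega),
      hPoly_coeff_eq_div (D := i + 1 + a) (a := a) (b := b + 2) (by omega) (by omega)]
    rw [show i + 1 + (a + 2) + b = i + a + b + 3 by omega,
      show i + 1 + (a + 1) + (b + 1) = i + a + b + 3 by omega,
      show i + (a + 2) + (b + 2) = i + a + b + 4 by omega,
      show i + 1 + a + (b + 2) = i + a + b + 3 by omega]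
    simp only [Nat.factorial_succ]
    push_cast
    field_simp
    ring

theorem hPoly_natDegree (M D : ℕ) (h : 2 * D ≤ M) : (hPoly M D).natDegree = D := by
  refine natDegree_eq_of_le_of_coeff_ne_zero
    (natDegree_le_iff_coeff_eq_zero.mpr fun j hj => hPoly_coeff_eq_zero hj) ?_
  rw [hPoly_coeff]
  have : 0 < (M - D).choose D := Nat.choose_pos (by omega)
  simp
  omega

theorem hPoly_coeff_nonneg (M D j : ℕ) : 0 ≤ (hPoly M D).coeff j := by
  rw [hPoly_coeff]
  positivity

theorem hPoly_leadingCoeff_pos (M D : ℕ) (h : 2 * D ≤ M) : 0 < (hPoly M D).leadingCoeff := by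
  refine lt_of_le_of_ne (hPoly_coeff_nonneg _ _ _) (Ne.symm ?_)
  rw [leadingCoeff, hPoly_natDegree M D h, hPoly_coeff]
  have : 0 < (M - D).choose D := Nat.choose_pos (by omega)
  simp
  omega

theorem hPoly_root_neg {M D : ℕ} (h : 2 * D ≤ M) {x : ℝ} (hx : (hPoly M D).IsRoot x) :
    x < 0 := by
  by_contra! h0
  have h1 : (hPoly M D).coeff 0 * x ^ 0 ≤ (hPoly M D).eval x := by
    rw [eval_eq_sum_range]
    exact Finset.single_le_sum
      (f := fun i => (hPoly M D).coeff i * x ^ i)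
      (fun i _ => mul_nonneg (hPoly_coeff_nonneg _ _ _) (pow_nonneg h0 i))
      (Finset.mem_range.mpr (Nat.succ_pos _))
  rw [hx.eq_zero, hPoly_coeff] at h1
  have : 0 < M.choose D := Nat.choose_pos (by omega)
  have : (0 : ℝ) < M.choose D := by exact_mod_cast this
  simp at h1
  linarith

theorem roots_eq_map_of_strictMono {f : Polynomial ℝ} {m : ℕ} {a : ℕ → ℝ} (hf : f ≠ 0)
    (hdeg : f.natDegree = m) (ha : ∀ i j, i < j → j < m → a i < a j)
    (hroot : ∀ i < m, f.IsRoot (a i)) :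
    f.roots = (Multiset.range m).map a := by
  have hinj : Set.InjOn a {i | i < m} := by
    intro i hi j hj hij
    rcases lt_trichotomy i j with h | h | h
    · exact absurd hij (ha i j h hj).ne
    · exact h
    · exact absurd hij (ha j i h hi).ne'
  have hnodup : ((Multiset.range m).map a).Nodup :=
    Multiset.Nodup.map_on
      (fun i hi j hj hij => hinj (Multiset.mem_range.mp hi) (Multiset.mem_range.mp hj) hij)
      (Multiset.nodup_range m)
  symm
  refine Multiset.eq_of_le_of_card_le ((Multiset.le_iff_subset hnodup).mpr ?_) ?_
  · intro x hx
    obtain ⟨i, hi, rfl⟩ := Multiset.mem_map.mp hx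
    exact (mem_roots hf).mpr (hroot i (Multiset.mem_range.mp hi))
  · simpa [hdeg] using card_roots' f

theorem ascRoots_eq_map_of_strictMono {f : Polynomial ℝ} {m : ℕ} {a : ℕ → ℝ} (hf : f ≠ 0)
    (hdeg : f.natDegree = m) (ha : ∀ i j, i < j → j < m → a i < a j)
    (hroot : ∀ i < m, f.IsRoot (a i)) :
    ascRoots f = (List.range m).map a := by
  have hr := roots_eq_map_of_strictMono hf hdeg ha hroot
  unfold ascRoots
  refine List.Perm.eq_of_pairwise' (r := (· ≤ ·)) (Multiset.pairwise_sort _ _) ?_ ?_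
  · rw [List.pairwise_map]
    refine List.Pairwise.imp_of_mem ?_ (List.pairwise_lt_range (n := m))
    intro i j _ hj hij
    exact (ha i j hij (List.mem_range.mp hj)).le
  · rw [← Multiset.coe_eq_coe, Multiset.sort_eq, hr]
    rfl

theorem eq_prod_of_strictMono {f : Polynomial ℝ} {m : ℕ} {a : ℕ → ℝ} (hf : f ≠ 0)
    (hdeg : f.natDegree = m) (ha : ∀ i j, i < j → j < m → a i < a j)
    (hroot : ∀ i < m, f.IsRoot (a i)) :
    f = C f.leadingCoeff * ∏ i ∈ Finset.range m, (X - C (a i)) := by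
  have hr := roots_eq_map_of_strictMono hf hdeg ha hroot
  have h := C_leadingCoeff_mul_prod_multiset_X_sub_C (p := f) (by simp [hr, hdeg])
  rw [hr, Multiset.map_map] at h
  exact h.symm

theorem neg_one_pow_mul_prod_sub_pos {a : ℕ → ℝ} {x : ℝ} {j m : ℕ} (hjm : j ≤ m)
    (hlt : ∀ i < j, a i < x) (hgt : ∀ i, j ≤ i → i < m → x < a i) :
    0 < (-1 : ℝ) ^ (m + j) * ∏ i ∈ Finset.range m, (x - a i) := by
  induction m, hjm using Nat.le_induction with
  | base =>
    rw [Even.neg_one_pow ⟨j, rfl⟩, one_mul]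
    exact Finset.prod_pos fun i hi => sub_pos.mpr (hlt i (Finset.mem_range.mp hi))
  | succ m hjm ih =>
    have h1 := ih fun i h h' => hgt i h (by omega)
    have h2 := hgt m hjm (by omega)
    rw [Finset.prod_range_succ, show m + 1 + j = m + j + 1 by omega, pow_succ]
    have := mul_pos h1 (sub_pos.mpr h2)
    linarith

theorem neg_one_pow_mul_eval_pos {f : Polynomial ℝ} {m : ℕ} {a : ℕ → ℝ}
    (hlc : 0 < f.leadingCoeff) (hdeg : f.natDegree = m)
    (ha : ∀ i j, i < j → j < m → a i < a j) (hroot : ∀ i < m, f.IsRoot (a i))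
    {x : ℝ} {j : ℕ} (hjm : j ≤ m)
    (hlt : ∀ i < j, a i < x) (hgt : ∀ i, j ≤ i → i < m → x < a i) :
    0 < (-1 : ℝ) ^ (m + j) * f.eval x := by
  have hf : f ≠ 0 := by
    rintro rfl
    simp at hlc
  rw [eq_prod_of_strictMono hf hdeg ha hroot, eval_mul, eval_C, eval_prod]
  simp only [eval_sub, eval_X, eval_C]
  have := mul_pos hlc (neg_one_pow_mul_prod_sub_pos hjm hlt hgt)
  linarith

/-- `p` and `q` have positive leading coefficients, degrees `k` and `k + 1`, and only real roots,
and the roots of `p` strictly separate those of `q`. -/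
structure StrictlyInterlaces (k : ℕ) (p q : Polynomial ℝ) (b a : ℕ → ℝ) : Prop where
  natDegree_left : p.natDegree = k
  natDegree_right : q.natDegree = k + 1
  leadingCoeff_left : 0 < p.leadingCoeff
  leadingCoeff_right : 0 < q.leadingCoeff
  isRoot_left : ∀ i < k, p.IsRoot (b i)
  isRoot_right : ∀ i < k + 1, q.IsRoot (a i)
  lt_left : ∀ i < k, a i < b i
  lt_right : ∀ i < k, b i < a (i + 1)

namespace StrictlyInterlaces

variable {k : ℕ} {p q : Polynomial ℝ} {b a : ℕ → ℝ}

theorem strictMono_right (h : StrictlyInterlaces k p q b a) (i j : ℕ) (hij : i < j)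
    (hj : j < k + 1) : a i < a j := by
  induction j, hij using Nat.le_induction with
  | base => exact (h.lt_left i (by omega)).trans (h.lt_right i (by omega))
  | succ j _ ih =>
    exact (ih (by omega)).trans ((h.lt_left j (by omega)).trans (h.lt_right j (by omega)))

theorem strictMono_left (h : StrictlyInterlaces k p q b a) (i j : ℕ) (hij : i < j)
    (hj : j < k) : b i < b j := by
  have h1 : a (i + 1) ≤ a j := by
    rcases Nat.eq_or_lt_of_le (show i + 1 ≤ j from hij) with rfl | h'
    · exact le_rfl
    · exact (h.strictMono_right _ _ h' (by omega)).le
  linarith [h.lt_right i (by omega), h.lt_left j hj]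

end StrictlyInterlaces

theorem exists_gt_eval_pos {r : Polynomial ℝ} (hdeg : 0 < r.natDegree)
    (hlc : 0 < r.leadingCoeff) (x : ℝ) : ∃ y, x < y ∧ 0 < r.eval y := by
  have h := r.tendsto_atTop_of_leadingCoeff_nonneg (natDegree_pos_iff_degree_pos.mp hdeg) hlc.le
  exact ((Filter.eventually_gt_atTop x).and (h.eventually_gt_atTop 0)).exists

theorem exists_lt_neg_one_pow_mul_eval_pos {r : Polynomial ℝ} (hdeg : 0 < r.natDegree)
    (hlc : 0 < r.leadingCoeff) (x : ℝ) :
    ∃ y, y < x ∧ 0 < (-1 : ℝ) ^ r.natDegree * r.eval y := by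
  have hne : (-1 : ℝ) ^ r.natDegree ≠ 0 := by simp
  have hd : (C ((-1 : ℝ) ^ r.natDegree) * r.comp (-X)).natDegree = r.natDegree := by
    rw [natDegree_C_mul hne, natDegree_comp]
    simp
  obtain ⟨y, hy, h⟩ := exists_gt_eval_pos (r := C ((-1 : ℝ) ^ r.natDegree) * r.comp (-X))
    (by rwa [hd]) (by
      rw [leadingCoeff_mul, leadingCoeff_C, leadingCoeff_comp (by simp), leadingCoeff_neg,
        leadingCoeff_X, mul_left_comm, ← mul_pow]
      simpa using hlc) (-x)
  refine ⟨-y, by linarith, ?_⟩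
  simpa using h

theorem exists_root_of_mul_neg (r : Polynomial ℝ) {x y : ℝ} (hxy : x < y)
    (h : r.eval x * r.eval y < 0) : ∃ z, x < z ∧ z < y ∧ r.IsRoot z := by
  rcases mul_neg_iff.mp h with ⟨h1, h2⟩ | ⟨h1, h2⟩
  · obtain ⟨z, hz, h0⟩ := intermediate_value_Ioo' hxy.le r.continuous.continuousOn ⟨h2, h1⟩
    exact ⟨z, hz.1, hz.2, h0⟩
  · obtain ⟨z, hz, h0⟩ := intermediate_value_Ioo hxy.le r.continuous.continuousOn ⟨h1, h2⟩
    exact ⟨z, hz.1, hz.2, h0⟩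

/-- A three-term recurrence step preserves strict interlacing. -/
theorem StrictlyInterlaces.step {k : ℕ} {p q r : Polynomial ℝ} {b a : ℕ → ℝ}
    (h : StrictlyInterlaces k p q b a) {E A B F : ℝ} (hE : 0 < E) (hF : 0 < F)
    (hdeg : r.natDegree = k + 2) (hlc : 0 < r.leadingCoeff)
    (hr : C E * r = (C A * X + C B) * q - C F * p) :
    ∃ c, StrictlyInterlaces (k + 1) q r a c := by
  have hsign : ∀ i ≤ k, 0 < (-1 : ℝ) ^ (k + i + 1) * r.eval (a i) := by
    intro i hi
    have h1 := neg_one_pow_mul_eval_pos h.leadingCoeff_left h.natDegree_left h.strictMono_left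
      h.isRoot_left hi (x := a i) (fun l hl => by
        have := h.lt_right l (by omega)
        rcases Nat.eq_or_lt_of_le (show l + 1 ≤ i from hl) with rfl | h'
        · exact this
        · exact this.trans (h.strictMono_right _ _ h' (by omega)))
      (fun l hl hlk => by
        have := h.lt_left l hlk
        rcases Nat.eq_or_lt_of_le hl with rfl | h'
        · exact this
        · exact (h.strictMono_right _ _ h' (by omega)).trans this)
    have h2 : E * r.eval (a i) = -(F * p.eval (a i)) := by
      have := congrArg (eval (a i)) hr
      simpa [(h.isRoot_right i (by omega)).eq_zero] using this
    have h3 : E * ((-1 : ℝ) ^ (k + i + 1) * r.eval (a i)) =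
        F * ((-1 : ℝ) ^ (k + i) * p.eval (a i)) := by
      rw [pow_succ]
      linear_combination (-(-1 : ℝ) ^ (k + i)) * h2
    exact pos_of_mul_pos_right (h3 ▸ mul_pos hF h1) hE.le
  obtain ⟨L, hL, hL'⟩ := exists_lt_neg_one_pow_mul_eval_pos (r := r) (by omega) hlc (a 0)
  obtain ⟨U, hU, hU'⟩ := exists_gt_eval_pos (r := r) (by omega) hlc (a k)
  rw [hdeg] at hL'
  have hex : ∀ i, ∃ c, i < k + 2 →
      r.IsRoot c ∧ (i < k + 1 → c < a i) ∧ (∀ l, i = l + 1 → a l < c) := by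
    intro i
    by_cases hi : i < k + 2
    swap
    · exact ⟨0, fun h => absurd h hi⟩
    obtain ⟨x, hx, hx'⟩ : ∃ x, 0 < (-1 : ℝ) ^ (k + i) * r.eval x ∧
        (i < k + 1 → x < a i) ∧ (i = k + 1 → x < U) ∧ (∀ l, i = l + 1 → a l ≤ x) := by
      rcases i with _ | l
      · refine ⟨L, by simpa [pow_add] using hL', fun _ => hL, by omega, by omega⟩
      · refine ⟨a l, by simpa [add_assoc] using hsign l (by omega),
          fun h' => h.strictMono_right _ _ (by omega) h', ?_, ?_⟩
        · intro hl
          obtain rfl : l = k := by omega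
          exact hU
        · intro l' hl
          obtain rfl : l = l' := by omega
          exact le_rfl
    obtain ⟨y, hy, hxy, hy'⟩ : ∃ y, 0 < (-1 : ℝ) ^ (k + i + 1) * r.eval y ∧ x < y ∧
        (i < k + 1 → y ≤ a i) := by
      by_cases hik : i < k + 1
      · exact ⟨a i, hsign i (by omega), hx'.1 hik, fun _ => le_rfl⟩
      · obtain rfl : i = k + 1 := by omega
        refine ⟨U, ?_, hx'.2.1 rfl, fun h => absurd h hik⟩
        rw [Even.neg_one_pow ⟨k + 1, by omega⟩, one_mul]
        exact hU'
    have hneg : r.eval x * r.eval y < 0 := by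
      have h1 := mul_pos hx hy
      have h2 : ((-1 : ℝ) ^ (k + i)) * (-1 : ℝ) ^ (k + i) = 1 := by
        rw [← mul_pow]
        simp
      rw [pow_succ] at h1
      have h3 : (-1 : ℝ) ^ (k + i) * eval x r * ((-1) ^ (k + i) * -1 * eval y r) =
          -(eval x r * eval y r) := by
        linear_combination (-(eval x r * eval y r)) * h2
      linarith
    obtain ⟨z, hxz, hzy, hz⟩ := exists_root_of_mul_neg r hxy hneg
    exact ⟨z, fun _ => ⟨hz, fun h' => hzy.trans_le (hy' h'),
      fun l hl => (hx'.2.2 l hl).trans_lt hxz⟩⟩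
  choose c hc using hex
  exact ⟨c, h.natDegree_right, hdeg, h.leadingCoeff_right, hlc, h.isRoot_right,
    fun i hi => (hc i hi).1, fun i hi => (hc i (by omega)).2.1 hi,
    fun i hi => (hc (i + 1) (by omega)).2.2 i rfl⟩

theorem hPoly_strictlyInterlaces (M D : ℕ) (h : 2 * (D + 1) ≤ M) :
    ∃ b a, StrictlyInterlaces D (hPoly M D) (hPoly M (D + 1)) b a := by
  induction D with
  | zero =>
    have hd := hPoly_natDegree M 1 (by omega)
    obtain ⟨x, hx⟩ := exists_root_of_degree_eq_one
      ((degree_eq_iff_natDegree_eq_of_pos one_pos).mpr hd)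
    exact ⟨fun _ => 0, fun _ => x, hPoly_natDegree M 0 (by omega), hd,
      hPoly_leadingCoeff_pos M 0 (by omega), hPoly_leadingCoeff_pos M 1 (by omega),
      by omega, fun _ _ => hx, by omega, by omega⟩
  | succ D ih =>
    obtain ⟨b, a, hba⟩ := ih (by omega)
    have hM : 2 * ((D : ℝ) + 2) ≤ M := by exact_mod_cast h
    have hD : (0 : ℝ) ≤ D := Nat.cast_nonneg D
    obtain ⟨c, hc⟩ := hba.step
      (mul_pos (mul_pos (by positivity) (by linarith)) (by linarith))
      (mul_pos (mul_pos (mul_pos two_pos (by linarith)) (by linarith)) (by linarith))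
      (hPoly_natDegree M (D + 2) h) (hPoly_leadingCoeff_pos M (D + 2) h)
      (hPoly_recurrence M D h)
    exact ⟨a, c, hc⟩

theorem getD_map_range {m i : ℕ} (a : ℕ → ℝ) (hi : i < m) :
    ((List.range m).map a).getD i 0 = a i := by
  simp [List.getD_eq_getElem?_getD, hi]

/-- Multiplying strictly interlacing polynomials with negative roots by `X` gives
interlacing polynomials. -/
theorem StrictlyInterlaces.interlaces_X_mul {k : ℕ} {p q : Polynomial ℝ} {b a : ℕ → ℝ}
    (h : StrictlyInterlaces k p q b a) (hp : ∀ x, p.IsRoot x → x < 0)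
    (hq : ∀ x, q.IsRoot x → x < 0) : Interlaces (X * p) (X * q) := by
  have key : ∀ (m : ℕ) (f : Polynomial ℝ) (e : ℕ → ℝ), 0 < f.leadingCoeff → f.natDegree = m →
      (∀ i j, i < j → j < m → e i < e j) → (∀ i < m, f.IsRoot (e i)) →
      (∀ x, f.IsRoot x → x < 0) →
      (X * f).natDegree = m + 1 ∧ RealRooted (X * f) ∧
        ascRoots (X * f) = (List.range (m + 1)).map fun i => if i < m then e i else 0 := by
    intro m f e hlc hdeg he hroot hneg
    have hf : f ≠ 0 := by
      rintro rfl
      simp at hlc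
    have h0 : X * f ≠ 0 := mul_ne_zero X_ne_zero hf
    have hd : (X * f).natDegree = m + 1 := by rw [natDegree_X_mul hf, hdeg]
    have hmono : ∀ i j, i < j → j < m + 1 →
        (if i < m then e i else 0) < (if j < m then e j else 0) := by
      intro i j hij hj
      rw [if_pos (by omega)]
      split_ifs with hjm
      · exact he i j hij hjm
      · exact hneg _ (hroot i (by omega))
    have hr : ∀ i < m + 1, (X * f).IsRoot (if i < m then e i else 0) := by
      intro i _
      split_ifs with him
      · simp [(hroot i him).eq_zero]
      · simp
    refine ⟨hd, ?_, ascRoots_eq_map_of_strictMono h0 hd hmono hr⟩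
    rw [RealRooted, roots_eq_map_of_strictMono h0 hd hmono hr, hd]
    simp
  obtain ⟨hdp, hrp, hap⟩ := key k p b h.leadingCoeff_left h.natDegree_left h.strictMono_left
    h.isRoot_left hp
  obtain ⟨hdq, hrq, haq⟩ := key (k + 1) q a h.leadingCoeff_right h.natDegree_right
    h.strictMono_right h.isRoot_right hq
  refine ⟨hrp, hrq, Or.inr (Or.inr (Or.inr ⟨by omega, ?_, ?_⟩))⟩
  · intro i hi
    rw [hap, haq, getD_map_range _ (by omega), getD_map_range _ (by omega), if_pos (by omega)]
    split_ifs with hik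
    · exact (h.lt_left i hik).le
    · exact (hq _ (h.isRoot_right i (by omega))).le
  · intro i hi
    rw [hap, haq, getD_map_range _ (by omega), getD_map_range _ (by omega)]
    by_cases hik : i < k
    · rw [if_pos hik, if_pos (by omega)]
      exact (h.lt_right i hik).le
    · rw [if_neg hik, if_neg (by omega)]

/-- For fixed `n ≥ 2` and every `1 ≤ d ≤ ⌊n/2⌋ - 1`, the polynomials `g_{n,d}` and
`g_{n,d+1}` are real-rooted and `g_{n,d} ⪯ g_{n,d+1}`; hence `{g_{n,d}(t)}_{d=1}^{⌊n/2⌋}`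
is a generalized Sturm sequence. -/
theorem gPoly_sturm_fixed_n (n : ℕ) (hn : 2 ≤ n) (d : ℕ) (hd : 1 ≤ d) (hd2 : d ≤ n / 2 - 1) :
    RealRooted (gPoly n d) ∧ RealRooted (gPoly n (d + 1)) ∧
      Interlaces (gPoly n d) (gPoly n (d + 1)) := by
  obtain ⟨D, rfl⟩ := Nat.exists_eq_add_of_le' hd
  obtain ⟨M, rfl⟩ := Nat.exists_eq_add_of_le' hn
  have hM : 2 * (D + 1) ≤ M := by omega
  obtain ⟨b, a, h⟩ := hPoly_strictlyInterlaces M D hM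
  have hI := h.interlaces_X_mul (fun _ hx => hPoly_root_neg (by omega) hx)
    (fun _ hx => hPoly_root_neg hM hx)
  rw [gPoly_eq_X_mul_hPoly M D (by omega), gPoly_eq_X_mul_hPoly M (D + 1) hM]
  exact ⟨hI.1, hI.2.1, hI⟩
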